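/- As n → ∞, the pair sum over pairs sharing many edges vanishes: Σ_{s=⌈0.99n⌉}^{n−2} Σ_{g=1}^{min{s+1, ⌊(n−s)/2⌋}} c_{s,g} → 0. -/

import Mathlib

open MeasureTheory Filter

namespace RandomHypercube

/-- Index of a (potential) hypercube edge: the lower endpoint `A` together with the
direction `i` that is added, representing the edge from `A` to `A ∪ {i}`. -/
abbrev EdgeIdx (n : ℕ) := Finset (Fin n) × Fin n

/-- The sample space: an i.i.d. Uniform[0,1] weight for each edge index. -/
abbrev CubeOmega (n : ℕ) := EdgeIdx n → ℝ

/-- The product of uniform measures on [0,1], one for each edge. -/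
noncomputable def cubeMeasure (n : ℕ) : Measure (CubeOmega n) :=
  Measure.pi fun _ => (volume : Measure ℝ).restrict (Set.Icc 0 1)

/-- The vertex visited by the direct path associated to the permutation `σ`
just before taking its `j`-th step: the image under `σ` of `{0, …, j-1}`. -/
def initSeg (n : ℕ) (σ : Equiv.Perm (Fin n)) (j : Fin n) : Finset (Fin n) :=
  (Finset.univ.filter fun i => i < j).image σ

/-- The edge used in the `j`-th step of the direct path associated to `σ`. -/
def pathEdge (n : ℕ) (σ : Equiv.Perm (Fin n)) (j : Fin n) : EdgeIdx n :=
  (initSeg n σ j, σ j)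

/-- The direct path associated to `σ` is accessible if its successive edge
weights are strictly increasing. -/
def Accessible (n : ℕ) (σ : Equiv.Perm (Fin n)) (ω : CubeOmega n) : Prop :=
  StrictMono fun j : Fin n => ω (pathEdge n σ j)

/-- The number of accessible direct paths from `∅` to `[n]`. -/
noncomputable def X (n : ℕ) (ω : CubeOmega n) : ℕ :=
  Nat.card {σ : Equiv.Perm (Fin n) // Accessible n σ ω}


/-- The set of steps `j` at which the direct paths of `σ` and `σ'` use the same edge
(shared edges necessarily occur at the same level in both paths). -/
def sharedSteps (n : ℕ) (σ σ' : Equiv.Perm (Fin n)) : Finset (Fin n) :=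
  Finset.univ.filter fun j => pathEdge n σ j = pathEdge n σ' j

/-- Given the sorted list `l` of steps (levels) of the shared edges, the gap vector:
the number of edges before the first shared edge, strictly between consecutive shared
edges, and after the last shared edge. -/
def gapsOfList (n : ℕ) (l : List ℕ) : List ℕ :=
  List.zipWith (fun a b => b - a) (0 :: l.map (· + 1)) (l ++ [n])

/-- The gap vector of the direct path of `σ'` relative to that of `σ`. -/
def gapVector (n : ℕ) (σ σ' : Equiv.Perm (Fin n)) : List ℕ :=
  gapsOfList n (((sharedSteps n σ σ').sort (· ≤ ·)).map Fin.val)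

/-- The number of (nontrivial) gaps between the direct paths of `σ` and `σ'`:
the number of nonzero entries of the gap vector. -/
def numGaps (n : ℕ) (σ σ' : Equiv.Perm (Fin n)) : ℕ :=
  ((gapVector n σ σ').filter (· != 0)).length

/-- The probability that the direct paths of `σ` and `σ'` are both accessible. -/
noncomputable def pairProb (n : ℕ) (σ σ' : Equiv.Perm (Fin n)) : ℝ :=
  (cubeMeasure n {ω | Accessible n σ ω ∧ Accessible n σ' ω}).toReal

/-- `c n s g`: the sum, over all ordered pairs of direct paths sharing exactly `s`
edges with `g` gaps, of the probability that both paths are accessible. -/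
noncomputable def c (n s g : ℕ) : ℝ :=
  ∑ p ∈ Finset.univ.filter
      (fun p : Equiv.Perm (Fin n) × Equiv.Perm (Fin n) =>
        (sharedSteps n p.1 p.2).card = s ∧ numGaps n p.1 p.2 = g),
    pairProb n p.1 p.2

/-- `w m`: the number of direct paths from `∅` to `[m]` in the `m`-dimensional hypercube
that are edge-disjoint from the canonical path (the identity permutation). -/
noncomputable def w (m : ℕ) : ℕ :=
  Nat.card {σ : Equiv.Perm (Fin m) // sharedSteps m σ 1 = ∅}

end RandomHypercube

namespace RandomHypercube

/-- strong fixed points -/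
def SF (n : ℕ) (τ : Equiv.Perm (Fin n)) : Finset (Fin n) :=
  Finset.univ.filter fun j => τ j = j ∧ ∀ i < j, τ i < j

/-- the complement of the strong fixed points -/
def NS (n : ℕ) (τ : Equiv.Perm (Fin n)) : Finset (Fin n) := (SF n τ)ᶜ

lemma mem_SF {n : ℕ} {τ : Equiv.Perm (Fin n)} {j : Fin n} :
    j ∈ SF n τ ↔ τ j = j ∧ ∀ i < j, τ i < j := by simp [SF]

lemma mem_NS {n : ℕ} {τ : Equiv.Perm (Fin n)} {j : Fin n} :
    j ∈ NS n τ ↔ j ∉ SF n τ := by simp [NS]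

lemma image_Iio_eq {n : ℕ} (τ : Equiv.Perm (Fin n)) (j : Fin n) (h : ∀ i < j, τ i < j) :
    (Finset.univ.filter fun i => i < j).image τ = Finset.univ.filter fun i => i < j := by
  apply Finset.eq_of_subset_of_card_le
  · intro a ha
    simp only [Finset.mem_image, Finset.mem_filter, Finset.mem_univ, true_and] at ha ⊢
    obtain ⟨i, hi, rfl⟩ := ha
    exact h i hi
  · rw [Finset.card_image_of_injective _ τ.injective]

lemma le_of_pres {n : ℕ} (τ : Equiv.Perm (Fin n)) (j : Fin n) (h : ∀ i < j, τ i < j)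
    (i : Fin n) : τ i < j ↔ i < j := by
  refine ⟨fun hi => ?_, h i⟩
  have : τ i ∈ (Finset.univ.filter fun i => i < j).image τ := by
    rw [image_Iio_eq τ j h]; simpa using hi
  simp only [Finset.mem_image, Finset.mem_filter, Finset.mem_univ, true_and] at this
  obtain ⟨k, hk, hk'⟩ := this
  rwa [← τ.injective hk']

lemma shared_eq {n : ℕ} (σ τ : Equiv.Perm (Fin n)) :
    sharedSteps n σ (σ * τ) = SF n τ := by
  ext j
  simp only [sharedSteps, SF, Finset.mem_filter, Finset.mem_univ, true_and, pathEdge, initSeg,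
    Prod.mk.injEq, Equiv.Perm.coe_mul, Function.comp_apply]
  rw [← Finset.image_image, (Finset.image_injective σ.injective).eq_iff, σ.injective.eq_iff]
  constructor
  · rintro ⟨h1, h2⟩
    refine ⟨h2.symm, fun i hi => ?_⟩
    have : τ i ∈ (Finset.univ.filter fun i => i < j).image τ :=
      Finset.mem_image_of_mem _ (by simpa using hi)
    rw [← h1] at this
    simpa using this
  · rintro ⟨h1, h2⟩
    exact ⟨(image_Iio_eq τ j h2).symm, h1.symm⟩

/-- start of a run of non-shared steps -/
def IsStart (n : ℕ) (τ : Equiv.Perm (Fin n)) (j : Fin n) : Prop :=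
  ∀ i ∈ NS n τ, i.val + 1 ≠ j.val

lemma start_pres {n : ℕ} {τ : Equiv.Perm (Fin n)} {j : Fin n} (h : IsStart n τ j) :
    ∀ i < j, τ i < j := by
  intro i hi
  have hj : j.val - 1 < n := by omega
  have hi' : i.val < j.val := hi
  have hp : (⟨j.val - 1, hj⟩ : Fin n) ∈ SF n τ := by
    by_contra hc
    exact h _ (mem_NS.2 hc) (by simp; omega)
  obtain ⟨h1, h2⟩ := mem_SF.1 hp
  rcases Nat.lt_or_ge i.val (j.val - 1) with h3 | h3
  · have := h2 i h3
    rw [Fin.lt_def] at this ⊢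
    simp at this; omega
  · have : i = ⟨j.val - 1, hj⟩ := by ext; simp; omega
    rw [this, h1, Fin.lt_def]; simp; omega

lemma NS_maps {n : ℕ} {τ : Equiv.Perm (Fin n)} {j : Fin n} (h : j ∈ NS n τ) : τ j ∈ NS n τ := by
  rw [mem_NS] at h ⊢
  intro hc
  have := (mem_SF.1 hc).1
  have h2 := τ.injective this
  rw [h2] at hc
  exact h hc

lemma start_succ {n : ℕ} {τ : Equiv.Perm (Fin n)} {j : Fin n} (h : IsStart n τ j)
    (hj : j ∈ NS n τ) : ∃ k ∈ NS n τ, k.val = j.val + 1 := by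
  by_contra hc
  push Not at hc
  apply mem_NS.1 hj
  have hp := start_pres h
  have hp' := le_of_pres τ j hp
  refine mem_SF.2 ⟨?_, hp⟩
  have h1 : j ≤ τ j := by
    by_contra hlt
    exact lt_irrefl _ ((hp' j).1 (not_le.1 hlt))
  rcases Nat.lt_or_ge (j.val + 1) n with h2 | h2
  · have hs : (⟨j.val + 1, h2⟩ : Fin n) ∈ SF n τ := by
      by_contra hcc
      exact hc _ (mem_NS.2 hcc) rfl
    have := (mem_SF.1 hs).2 j (by rw [Fin.lt_def]; simp)
    apply le_antisymm _ h1
    rw [Fin.lt_def] at this; rw [Fin.le_def]; simp at this; omega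
  · apply le_antisymm _ h1
    rw [Fin.le_def]; omega

open Classical in
/-- The code of a permutation. -/
noncomputable def code (n m : ℕ) (τ : Equiv.Perm (Fin n)) (h : (NS n τ).card = m) (i : Fin m) :
    Fin n ⊕ Fin m :=
  if IsStart n τ ((NS n τ).orderEmbOfFin h i) then Sum.inl ((NS n τ).orderEmbOfFin h i)
  else Sum.inr (((NS n τ).orderIsoOfFin h).symm
    ⟨τ ((NS n τ).orderEmbOfFin h i), NS_maps ((NS n τ).orderEmbOfFin_mem h i)⟩)

lemma emb_surj {n m : ℕ} (U : Finset (Fin n)) (h : U.card = m) {a : Fin n} (ha : a ∈ U) :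
    ∃ k, U.orderEmbOfFin h k = a := by
  have := U.range_orderEmbOfFin h
  have h2 : a ∈ Set.range (U.orderEmbOfFin h) := by rw [this]; exact ha
  exact h2

lemma code_inl {n m : ℕ} {τ : Equiv.Perm (Fin n)} {h : (NS n τ).card = m} {i : Fin m} {a : Fin n}
    (hc : code n m τ h i = Sum.inl a) :
    IsStart n τ ((NS n τ).orderEmbOfFin h i) ∧ (NS n τ).orderEmbOfFin h i = a := by
  unfold code at hc
  split_ifs at hc with h1
  exact ⟨h1, by simpa using hc⟩

lemma code_inr {n m : ℕ} {τ : Equiv.Perm (Fin n)} {h : (NS n τ).card = m} {i : Fin m} {b : Fin m}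
    (hc : code n m τ h i = Sum.inr b) :
    ¬ IsStart n τ ((NS n τ).orderEmbOfFin h i) ∧
      τ ((NS n τ).orderEmbOfFin h i) = (NS n τ).orderEmbOfFin h b := by
  unfold code at hc
  split_ifs at hc with h1
  refine ⟨h1, ?_⟩
  have h2 := Sum.inr.inj hc
  rw [← h2]
  conv_rhs => rw [← Finset.coe_orderIsoOfFin_apply]
  simp

lemma emb_pred {n m : ℕ} {τ : Equiv.Perm (Fin n)} (h : (NS n τ).card = m) (i : Fin m)
    (hs : ¬ IsStart n τ ((NS n τ).orderEmbOfFin h i)) :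
    ∃ k : Fin m, k.val + 1 = i.val ∧
      ((NS n τ).orderEmbOfFin h k).val + 1 = ((NS n τ).orderEmbOfFin h i).val := by
  unfold IsStart at hs
  push Not at hs
  obtain ⟨p, hp, hpe⟩ := hs
  obtain ⟨k, rfl⟩ := emb_surj _ h hp
  refine ⟨k, ?_, hpe⟩
  have hki : k < i := by
    rw [← ((NS n τ).orderEmbOfFin h).lt_iff_lt, Fin.lt_def]; omega
  by_contra hne
  have hki' : k.val < i.val := hki
  have hlt : k.val + 1 < m := by omega
  have h1 : (NS n τ).orderEmbOfFin h k < (NS n τ).orderEmbOfFin h ⟨k.val+1, hlt⟩ :=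
    ((NS n τ).orderEmbOfFin h).lt_iff_lt.2 (by rw [Fin.lt_def]; simp)
  have h2 : (NS n τ).orderEmbOfFin h ⟨k.val+1, hlt⟩ < (NS n τ).orderEmbOfFin h i :=
    ((NS n τ).orderEmbOfFin h).lt_iff_lt.2 (by rw [Fin.lt_def]; simp; omega)
  rw [Fin.lt_def] at h1 h2
  omega

lemma code_inj {n m : ℕ} {τ τ' : Equiv.Perm (Fin n)} (h : (NS n τ).card = m)
    (h' : (NS n τ').card = m) (hc : code n m τ h = code n m τ' h') : τ = τ' := by
  have hu : ∀ k : ℕ, ∀ hk : k < m, (NS n τ).orderEmbOfFin h ⟨k, hk⟩ =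
      (NS n τ').orderEmbOfFin h' ⟨k, hk⟩ := by
    intro k
    induction k with
    | zero =>
      intro hk
      rcases hx : code n m τ h ⟨0, hk⟩ with a | b
      · rw [(code_inl hx).2]
        rw [hc] at hx
        rw [(code_inl hx).2]
      · obtain ⟨k, hk, _⟩ := emb_pred h _ (code_inr hx).1
        simp at hk
    | succ k ih =>
      intro hk
      rcases hx : code n m τ h ⟨k+1, hk⟩ with a | b
      · rw [(code_inl hx).2]
        rw [hc] at hx
        rw [(code_inl hx).2]
      · obtain ⟨j, hj, hj2⟩ := emb_pred h _ (code_inr hx).1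
        rw [hc] at hx
        obtain ⟨j', hj', hj2'⟩ := emb_pred h' _ (code_inr hx).1
        have e1 : j = ⟨k, by omega⟩ := by ext; simp at hj ⊢; omega
        have e2 : j' = ⟨k, by omega⟩ := by ext; simp at hj' ⊢; omega
        rw [e1] at hj2
        rw [e2, ← ih] at hj2'
        ext
        omega
  have hu' : ∀ k : Fin m, (NS n τ).orderEmbOfFin h k = (NS n τ').orderEmbOfFin h' k :=
    fun k => hu k.val k.isLt
  have hU : NS n τ = NS n τ' := by
    ext a
    constructor
    · intro ha
      obtain ⟨k, rfl⟩ := emb_surj _ h ha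
      rw [hu' k]; exact Finset.orderEmbOfFin_mem _ _ _
    · intro ha
      obtain ⟨k, rfl⟩ := emb_surj _ h' ha
      rw [← hu' k]; exact Finset.orderEmbOfFin_mem _ _ _
  have key : ∀ d : ℕ, ∀ j : Fin n, n - j.val = d → τ j = τ' j := by
    intro d
    induction d using Nat.strong_induction_on with
    | _ d ih =>
    intro j hj
    have ih' : ∀ i : Fin n, j < i → τ i = τ' i := by
      intro i hi
      rw [Fin.lt_def] at hi
      exact ih (n - i.val) (by omega) i rfl
    by_cases hjU : j ∈ NS n τ
    · obtain ⟨k, rfl⟩ := emb_surj _ h hjU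
      rcases hx : code n m τ h k with a | b
      · have s1 := start_pres (code_inl hx).1
        rw [hc] at hx
        have s2 := start_pres (code_inl hx).1
        rw [← hu'] at s2
        set j := (NS n τ).orderEmbOfFin h k
        by_contra hne
        obtain ⟨i, hi⟩ := τ.surjective (τ' j)
        have hij : ¬ i < j := by
          rw [← le_of_pres τ j s1, hi, le_of_pres τ' j s2]
          exact lt_irrefl _
        rcases eq_or_lt_of_le (not_lt.1 hij) with h1 | h1
        · rw [← h1] at hi; exact hne hi
        · rw [ih' i h1] at hi
          exact (ne_of_gt h1) (τ'.injective hi)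
      · rw [(code_inr hx).2]
        rw [hc] at hx
        rw [hu' k, (code_inr hx).2, hu' b]
    · have hjU' := hjU
      rw [hU] at hjU'
      rw [mem_NS, not_not] at hjU hjU'
      rw [(mem_SF.1 hjU).1, (mem_SF.1 hjU').1]
  ext j : 1
  exact key _ j rfl

open Classical in
lemma code_starts {n m : ℕ} {τ : Equiv.Perm (Fin n)} (h : (NS n τ).card = m) :
    2 * (Finset.univ.filter fun i => (code n m τ h i).isLeft).card ≤ m := by
  set S := Finset.univ.filter fun i => (code n m τ h i).isLeft with hS
  have hle : S.card ≤ Sᶜ.card := by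
    have hex : ∀ i ∈ S, ∃ k ∈ Sᶜ, ((NS n τ).orderEmbOfFin h k).val =
        ((NS n τ).orderEmbOfFin h i).val + 1 := by
      intro i hi
      simp only [hS, Finset.mem_filter, Finset.mem_univ, true_and] at hi
      obtain ⟨a, ha⟩ := Sum.isLeft_iff.1 hi
      obtain ⟨h1, -⟩ := code_inl ha
      obtain ⟨k, hk, hke⟩ := start_succ h1 (Finset.orderEmbOfFin_mem _ _ _)
      obtain ⟨k, rfl⟩ := emb_surj _ h hk
      refine ⟨k, ?_, hke⟩
      simp only [hS, Finset.mem_compl, Finset.mem_filter, Finset.mem_univ, true_and]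
      intro hl
      obtain ⟨b, hb⟩ := Sum.isLeft_iff.1 hl
      exact (code_inl hb).1 _ (Finset.orderEmbOfFin_mem _ h i) hke.symm
    choose! f hf1 hf2 using hex
    refine Finset.card_le_card_of_injOn f hf1 ?_
    intro a ha b hb hab
    have h1 := hf2 a ha
    have h2 := hf2 b hb
    rw [hab, h2] at h1
    apply ((NS n τ).orderEmbOfFin h).injective
    ext; omega
  have := Finset.card_compl S
  simp only [Fintype.card_fin] at this
  have h3 : S.card ≤ m := by simpa using Finset.card_le_univ S
  omega

open Classical in
lemma count_bound {n m : ℕ} (q : ℝ) (hq : 0 < q) (hq1 : q ≤ 1) :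
    ((Finset.univ.filter fun τ : Equiv.Perm (Fin n) => (NS n τ).card = m).card : ℝ) * q ^ m ≤
      (n * q ^ 2 + m) ^ m := by
  let wt : Fin n ⊕ Fin m → ℝ := fun x => if x.isLeft then q ^ 2 else 1
  have hwt : ∀ x, 0 ≤ wt x := by intro x; simp only [wt]; split_ifs <;> positivity
  have hsum : ∑ x, wt x = n * q ^ 2 + m := by
    simp [wt, Fintype.sum_sum_type]
  rw [← hsum, Fintype.sum_pow]
  let F : Equiv.Perm (Fin n) → (Fin m → Fin n ⊕ Fin m) := fun τ =>
    if h : (NS n τ).card = m then code n m τ h else fun i => Sum.inr i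
  set T := Finset.univ.filter fun τ : Equiv.Perm (Fin n) => (NS n τ).card = m with hT
  have hinj : Set.InjOn F T := by
    intro a ha b hb hab
    have ha' : (NS n a).card = m := by simpa [hT] using ha
    have hb' : (NS n b).card = m := by simpa [hT] using hb
    simp only [F, dif_pos ha', dif_pos hb'] at hab
    exact code_inj ha' hb' hab
  calc (T.card : ℝ) * q ^ m = ∑ τ ∈ T, q ^ m := by simp
    _ ≤ ∑ τ ∈ T, ∏ i, wt (F τ i) := by
        apply Finset.sum_le_sum
        intro τ hτ
        have h : (NS n τ).card = m := by simpa [hT] using hτ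
        have : ∏ i, wt (F τ i) =
          (q ^ 2) ^ (Finset.univ.filter fun i => (code n m τ h i).isLeft).card := by
          simp only [F, dif_pos h, wt]
          rw [Finset.prod_ite]; simp
        rw [this, ← pow_mul]
        exact pow_le_pow_of_le_one hq.le hq1 (code_starts h)
    _ = ∑ p ∈ T.image F, ∏ i, wt (p i) := by
        rw [Finset.sum_image hinj]
    _ ≤ _ := by
        apply Finset.sum_le_univ_sum_of_nonneg
        intro p
        exact Finset.prod_nonneg fun i _ => hwt _

end RandomHypercube

namespace RandomHypercube

section comb
variable {n : ℕ} {ι : Type*}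

/-- non-shared steps of two chains -/
noncomputable def US (x y : Fin n → ι) : Finset (Fin n) :=
  open Classical in Finset.univ.filter fun j => x j ≠ y j

/-- the rank of `x j` among the non-shared elements -/
noncomputable def rk (x y : Fin n → ι) (ω : ι → ℝ) (j : Fin n) : ℕ :=
  open Classical in
  ((US x y).filter fun k => ω (y k) < ω (x j)).card + ((US x y).filter fun i => i < j).card

lemma rk_strictMono (x y : Fin n → ι) (ω : ι → ℝ) (hx : StrictMono (ω ∘ x)) :
    StrictMono (fun j : US x y => rk x y ω j) := by
  classical
  intro i j hij
  have hij' : (i : Fin n) < j := hij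
  unfold rk
  apply Nat.add_lt_add_of_le_of_lt
  · apply Finset.card_le_card
    intro k
    simp only [Finset.mem_filter]
    exact fun ⟨h1, h2⟩ => ⟨h1, h2.trans (hx hij')⟩
  · apply Finset.card_lt_card
    rw [Finset.ssubset_iff_of_subset]
    · exact ⟨i, by simp [hij'], by simp⟩
    · intro k
      simp only [Finset.mem_filter]
      exact fun ⟨h1, h2⟩ => ⟨h1, h2.trans hij'⟩

/-- The code of an interleaving -/
noncomputable def icode (x y : Fin n → ι) (ω : ι → ℝ) : Finset ℕ :=
  (US x y).image (rk x y ω)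

lemma icode_mem (x y : Fin n → ι) (ω : ι → ℝ) :
    icode x y ω ∈ (Finset.range (2 * (US x y).card)).powerset := by
  classical
  rw [Finset.mem_powerset]
  intro a ha
  simp only [icode, Finset.mem_image] at ha
  obtain ⟨j, hj, rfl⟩ := ha
  rw [Finset.mem_range, two_mul]
  unfold rk
  apply Nat.add_lt_add_of_le_of_lt
  · exact Finset.card_le_card (Finset.filter_subset _ _)
  · apply Finset.card_lt_card
    rw [Finset.ssubset_iff_of_subset (Finset.filter_subset _ _)]
    exact ⟨j, hj, by simp⟩

lemma icode_cross (x y : Fin n → ι) (ω ω' : ι → ℝ)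
    (hx : StrictMono (ω ∘ x)) (hx' : StrictMono (ω' ∘ x))
    (hy : StrictMono (ω ∘ y)) (hy' : StrictMono (ω' ∘ y))
    (hc : icode x y ω = icode x y ω') (j k : Fin n) (hj : j ∈ US x y) (hk : k ∈ US x y) :
    ω (y k) < ω (x j) ↔ ω' (y k) < ω' (x j) := by
  classical
  have hr : (fun j : US x y => rk x y ω j) = fun j : US x y => rk x y ω' j := by
    rw [← (rk_strictMono x y ω hx).range_inj (rk_strictMono x y ω' hx')]
    have e : ∀ ω, Set.range (fun j : US x y => rk x y ω j) = (icode x y ω : Set ℕ) := by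
      intro ω
      ext a
      simp [icode]
    rw [e, e, hc]
  have hrj : rk x y ω j = rk x y ω' j := congrFun hr ⟨j, hj⟩
  unfold rk at hrj
  have hcard := Nat.add_right_cancel hrj
  set A := (US x y).filter fun k => ω (y k) < ω (x j) with hA
  set B := (US x y).filter fun k => ω' (y k) < ω' (x j) with hB
  have hAB : A = B := by
    by_cases hs : A ⊆ B
    · exact Finset.eq_of_subset_of_card_le hs hcard.ge
    · symm
      apply Finset.eq_of_subset_of_card_le _ hcard.le
      obtain ⟨a, haA, haB⟩ := Finset.not_subset.1 hs
      intro b hb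
      simp only [hA, hB, Finset.mem_filter, not_and, not_lt] at haA haB hb ⊢
      refine ⟨hb.1, ?_⟩
      have h1 : ω' (y b) < ω' (y a) := hb.2.trans_le (haB haA.1)
      have h2 : b < a := hy'.lt_iff_lt.1 h1
      exact (hy h2).trans haA.2
  have : k ∈ A ↔ k ∈ B := by rw [hAB]
  simpa [hA, hB, hk] using this

/-- the elements of the two chains -/
noncomputable def EE (x y : Fin n → ι) : Finset ι :=
  open Classical in Finset.univ.image x ∪ (US x y).image y

lemma EE_card (x y : Fin n → ι) (hx : x.Injective) (hy : y.Injective)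
    (hxy : ∀ i j, x i = y j → i = j) : (EE x y).card = n + (US x y).card := by
  classical
  unfold EE
  rw [Finset.card_union_of_disjoint, Finset.card_image_of_injective _ hx,
    Finset.card_image_of_injective _ hy]
  · simp
  · rw [Finset.disjoint_left]
    intro a ha hb
    simp only [Finset.mem_image, Finset.mem_univ, true_and] at ha hb
    obtain ⟨i, rfl⟩ := ha
    obtain ⟨j, hj, hji⟩ := hb
    have := hxy i j hji.symm
    subst this
    simp [US] at hj
    exact hj hji.symm

lemma EE_order (x y : Fin n → ι) (ω ω' : ι → ℝ) (hω' : Function.Injective ω')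
    (hx : StrictMono (ω ∘ x)) (hx' : StrictMono (ω' ∘ x))
    (hy : StrictMono (ω ∘ y)) (hy' : StrictMono (ω' ∘ y))
    (hc : icode x y ω = icode x y ω') (a b : ι) (ha : a ∈ EE x y) (hb : b ∈ EE x y)
    (hab : ω a < ω b) : ω' a < ω' b := by
  classical
  have cl : ∀ a ∈ EE x y, (∃ j, a = x j) ∨ ∃ j ∈ US x y, a = y j := by
    intro a ha
    simp only [EE, Finset.mem_union, Finset.mem_image, Finset.mem_univ, true_and] at ha
    rcases ha with ⟨j, rfl⟩ | ⟨j, hj, rfl⟩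
    · exact Or.inl ⟨j, rfl⟩
    · exact Or.inr ⟨j, hj, rfl⟩
  have nU : ∀ j, j ∉ US x y → x j = y j := by
    intro j hj; simpa [US] using hj
  have xx : ∀ i j, ω (x i) < ω (x j) → ω' (x i) < ω' (x j) :=
    fun i j h => hx' (hx.lt_iff_lt.1 h)
  have yy : ∀ i j, ω (y i) < ω (y j) → ω' (y i) < ω' (y j) :=
    fun i j h => hy' (hy.lt_iff_lt.1 h)
  rcases cl a ha with ⟨i, rfl⟩ | ⟨i, hi, rfl⟩ <;> rcases cl b hb with ⟨j, rfl⟩ | ⟨j, hj, rfl⟩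
  · exact xx _ _ hab
  · by_cases hi : i ∈ US x y
    · have h1 : ¬ ω' (y j) < ω' (x i) := by
        rw [← icode_cross x y ω ω' hx hx' hy hy' hc i j hi hj]
        exact hab.not_gt
      refine lt_of_le_of_ne (not_lt.1 h1) fun h => ?_
      have := hω' h
      rw [this] at hab
      exact lt_irrefl _ hab
    · rw [nU i hi] at hab ⊢
      exact yy _ _ hab
  · by_cases hj : j ∈ US x y
    · exact (icode_cross x y ω ω' hx hx' hy hy' hc j i hj hi).1 hab
    · rw [nU j hj] at hab ⊢
      exact yy _ _ hab
  · exact yy _ _ hab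

lemma perm_eq (E : Finset ι) [DecidableEq ι] (ω : ι → ℝ) (hω : Function.Injective ω)
    (τ τ' : Equiv.Perm {a // a ∈ E})
    (h : ∀ a b : {a // a ∈ E}, ω (τ a) < ω (τ b) → ω (τ' a) < ω (τ' b)) : τ = τ' := by
  let v : {a // a ∈ E} → ℝ := fun a => ω (τ a)
  let v' : {a // a ∈ E} → ℝ := fun a => ω (τ' a)
  have hv : Function.Injective v := by
    intro a b hab
    exact τ.injective (Subtype.ext (hω hab))
  letI L : LinearOrder {a // a ∈ E} := LinearOrder.lift' v hv
  have m1 : StrictMono v := fun a b hab => hab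
  have m2 : StrictMono v' := fun a b hab => h a b hab
  have hr : Set.range v = Set.range v' := by
    have e1 : Set.range v = Set.range (fun a : {a // a ∈ E} => ω a) :=
      τ.surjective.range_comp (fun a : {a // a ∈ E} => ω a)
    have e2 : Set.range v' = Set.range (fun a : {a // a ∈ E} => ω a) :=
      τ'.surjective.range_comp (fun a : {a // a ∈ E} => ω a)
    rw [e1, e2]
  haveI : @WellFoundedLT {a // a ∈ E} L.toLT := by
    exact @Finite.to_wellFoundedLT _ _ L.toPreorder
  have := (m1.range_inj m2).1 hr
  ext a
  have h2 : ω (τ a) = ω (τ' a) := congrFun this a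
  exact hω h2

/-- both chains increasing -/
def AA (x y : Fin n → ι) : Set (ι → ℝ) := {ω | StrictMono (ω ∘ x) ∧ StrictMono (ω ∘ y)}

open Classical in
lemma count_perm (x y : Fin n → ι) (ω : ι → ℝ) (hω : Function.Injective ω) :
    (Finset.univ.filter fun τ : Equiv.Perm {a // a ∈ EE x y} =>
      ω ∘ (Equiv.Perm.ofSubtype τ) ∈ AA x y).card ≤ 4 ^ (US x y).card := by
  have h4 : (Finset.range (2 * (US x y).card)).powerset.card = 4 ^ (US x y).card := by
    rw [Finset.card_powerset, Finset.card_range, pow_mul]; norm_num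
  rw [← h4]
  apply Finset.card_le_card_of_injOn (fun τ => icode x y (ω ∘ (Equiv.Perm.ofSubtype τ)))
  · intro τ _
    exact icode_mem _ _ _
  · intro τ hτ τ' hτ' hc
    simp only [Finset.coe_filter, Finset.mem_univ, true_and, Set.mem_ofPred_eq] at hτ hτ'
    apply perm_eq (EE x y) ω hω
    intro a b hab
    have := EE_order x y _ _ (hω.comp (Equiv.Perm.ofSubtype τ').injective) hτ.1 hτ'.1 hτ.2 hτ'.2 hc
      a b a.2 b.2 (by simpa using hab)
    simpa using this

end comb

section meas
variable {n : ℕ} {ι : Type*} [Fintype ι]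

/-- uniform product -/
noncomputable def mu (ι : Type*) [Fintype ι] : Measure (ι → ℝ) :=
  Measure.pi fun _ => (volume : Measure ℝ).restrict (Set.Icc 0 1)

instance : IsProbabilityMeasure ((volume : Measure ℝ).restrict (Set.Icc 0 1)) :=
  ⟨by simp⟩

instance : IsProbabilityMeasure (mu ι) := by unfold mu; infer_instance

lemma mu_perm (τ : Equiv.Perm ι) : MeasurePreserving (fun ω : ι → ℝ => ω ∘ τ) (mu ι) (mu ι) := by
  have := measurePreserving_piCongrLeft (α := fun _ : ι => ℝ)
    (fun _ => (volume : Measure ℝ).restrict (Set.Icc 0 1)) τ.symm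
  unfold mu
  convert this using 1
  ext ω i
  have := MeasurableEquiv.piCongrLeft_apply_apply (β := fun _ : ι => ℝ) τ.symm ω (τ i)
  simpa using this.symm

lemma ae_inj : ∀ᵐ ω ∂(mu ι), Function.Injective ω := by
  classical
  have hmu : mu ι = (volume : Measure (ι → ℝ)).restrict (Set.univ.pi fun _ => Set.Icc 0 1) := by
    unfold mu
    rw [volume_pi, Measure.restrict_pi_pi]
  have h : ∀ a b : ι, a ≠ b → ∀ᵐ ω ∂(mu ι), ω a ≠ ω b := by
    intro a b hab
    rw [hmu]
    apply ae_restrict_of_ae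
    let S : Submodule ℝ (ι → ℝ) :=
      LinearMap.ker ((LinearMap.proj a : (ι → ℝ) →ₗ[ℝ] ℝ) - LinearMap.proj b)
    have hS : S ≠ ⊤ := by
      intro ht
      have : (Pi.single a 1 : ι → ℝ) ∈ S := by rw [ht]; trivial
      simp [S, Pi.single_apply, hab.symm] at this
    have h0 := Measure.addHaar_submodule (volume : Measure (ι → ℝ)) S hS
    rw [ae_iff]
    convert h0 using 2
    ext ω
    simp [S, sub_eq_zero]
  have h2 : ∀ᵐ ω ∂(mu ι), ∀ a b : ι, a ≠ b → ω a ≠ ω b := by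
    rw [ae_all_iff]; intro a
    rw [ae_all_iff]; intro b
    by_cases hab : a = b
    · simp [hab]
    · filter_upwards [h a b hab] with ω hω _ using hω
  filter_upwards [h2] with ω hω a b hab
  by_contra hne
  exact hω a b hne hab

lemma AA_meas (x y : Fin n → ι) : MeasurableSet (AA x y) := by
  have h : ∀ x : Fin n → ι, MeasurableSet {ω : ι → ℝ | StrictMono (ω ∘ x)} := by
    intro x
    have : {ω : ι → ℝ | StrictMono (ω ∘ x)} =
      ⋂ i : Fin n, ⋂ j : Fin n, ⋂ _ : i < j, {ω | ω (x i) < ω (x j)} := by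
      ext ω
      simp only [Set.mem_ofPred_eq, Set.mem_iInter]
      exact ⟨fun h i j hij => h hij, fun h i j hij => h i j hij⟩
    rw [this]
    refine MeasurableSet.iInter fun i => MeasurableSet.iInter fun j => MeasurableSet.iInter fun _ => ?_
    exact measurableSet_lt (measurable_pi_apply _) (measurable_pi_apply _)
  exact (h x).inter (h y)

lemma AA_bound (x y : Fin n → ι) :
    ((EE x y).card.factorial : ENNReal) * mu ι (AA x y) ≤ 4 ^ (US x y).card := by
  classical
  have h1 : ((EE x y).card.factorial : ENNReal) * mu ι (AA x y) =
      ∑ τ : Equiv.Perm {a // a ∈ EE x y},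
        mu ι ((fun ω : ι → ℝ => ω ∘ (Equiv.Perm.ofSubtype τ)) ⁻¹' AA x y) := by
    rw [Finset.sum_congr rfl fun τ _ => (mu_perm (Equiv.Perm.ofSubtype τ)).measure_preimage
      (AA_meas x y).nullMeasurableSet]
    simp [Fintype.card_perm]
  rw [h1]
  have hm : ∀ τ : Equiv.Perm {a // a ∈ EE x y}, MeasurableSet
      ((fun ω : ι → ℝ => ω ∘ (Equiv.Perm.ofSubtype τ)) ⁻¹' AA x y) :=
    fun τ => (mu_perm (Equiv.Perm.ofSubtype τ)).measurable (AA_meas x y)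
  rw [Finset.sum_congr rfl fun τ _ => (lintegral_indicator_one (μ := mu ι) (hm τ)).symm]
  rw [← lintegral_finsetSum _ fun τ _ => measurable_one.indicator (hm τ)]
  calc _ ≤ ∫⁻ ω, (4 : ENNReal) ^ (US x y).card ∂(mu ι) := by
        apply lintegral_mono_ae
        filter_upwards [ae_inj] with ω hω
        have := count_perm x y ω hω
        simp only [Set.indicator_apply, Pi.one_apply, Set.mem_preimage]
        rw [Finset.sum_boole]
        exact_mod_cast this
    _ = _ := by simp

end meas

lemma pathEdge_inj (n : ℕ) (σ : Equiv.Perm (Fin n)) : Function.Injective (pathEdge n σ) := by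
  intro a b h
  exact σ.injective (Prod.ext_iff.1 h).2

lemma pathEdge_level (n : ℕ) (σ σ' : Equiv.Perm (Fin n)) (i j : Fin n)
    (h : pathEdge n σ i = pathEdge n σ' j) : i = j := by
  have h1 := congrArg Finset.card (Prod.ext_iff.1 h).1
  simp only [pathEdge, initSeg] at h1
  rw [Finset.card_image_of_injective _ σ.injective,
    Finset.card_image_of_injective _ σ'.injective] at h1
  have e : ∀ i : Fin n, (Finset.univ.filter fun k => k < i).card = i.val := by
    intro i
    rw [Finset.filter_gt_eq_Iio, Fin.card_Iio]
  rw [e, e] at h1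
  exact Fin.ext h1

lemma pairProb_bound (n : ℕ) (σ σ' : Equiv.Perm (Fin n)) (m : ℕ)
    (hm : ((sharedSteps n σ σ')ᶜ).card = m) :
    pairProb n σ σ' ≤ 4 ^ m / ((n + m).factorial : ℝ) := by
  have hU : US (pathEdge n σ) (pathEdge n σ') = (sharedSteps n σ σ')ᶜ := by
    ext j; simp [US, sharedSteps]
  have h := AA_bound (pathEdge n σ) (pathEdge n σ')
  rw [EE_card _ _ (pathEdge_inj n σ) (pathEdge_inj n σ') (pathEdge_level n σ σ'), hU, hm] at h
  rw [le_div_iff₀ (by positivity), mul_comm]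
  have h2 := ENNReal.toReal_mono (by finiteness) h
  rw [ENNReal.toReal_mul] at h2
  simp only [ENNReal.toReal_natCast, ENNReal.toReal_pow, ENNReal.toReal_ofNat] at h2
  exact h2

end RandomHypercube

namespace RandomHypercube

lemma pairProb_nonneg (n : ℕ) (σ σ' : Equiv.Perm (Fin n)) : 0 ≤ pairProb n σ σ' :=
  ENNReal.toReal_nonneg

lemma sum_c_le (n s : ℕ) (I : Finset ℕ) :
    ∑ g ∈ I, c n s g ≤ ∑ p ∈ Finset.univ.filter
      (fun p : Equiv.Perm (Fin n) × Equiv.Perm (Fin n) => (sharedSteps n p.1 p.2).card = s),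
      pairProb n p.1 p.2 := by
  unfold c
  simp_rw [← Finset.filter_filter]
  simp_rw [Finset.sum_filter (fun p : Equiv.Perm (Fin n) × Equiv.Perm (Fin n) =>
    numGaps n p.1 p.2 = _)]
  rw [Finset.sum_comm]
  apply Finset.sum_le_sum
  intro p _
  rw [Finset.sum_ite_eq]
  split_ifs
  · exact le_rfl
  · exact pairProb_nonneg _ _ _

lemma card_pairs (n s m : ℕ) (hs : s + m = n) :
    (Finset.univ.filter
      (fun p : Equiv.Perm (Fin n) × Equiv.Perm (Fin n) => (sharedSteps n p.1 p.2).card = s)).card ≤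
    n.factorial * (Finset.univ.filter fun τ : Equiv.Perm (Fin n) => (NS n τ).card = m).card := by
  have : n.factorial = (Finset.univ : Finset (Equiv.Perm (Fin n))).card := by
    rw [Finset.card_univ, Fintype.card_perm, Fintype.card_fin]
  rw [this, ← Finset.card_product]
  apply Finset.card_le_card_of_injOn (fun p => (p.1, p.1⁻¹ * p.2))
  · rintro ⟨σ, σ'⟩ hp
    simp only [Finset.coe_filter, Finset.mem_univ, true_and, Set.mem_ofPred_eq] at hp
    have h := shared_eq σ (σ⁻¹ * σ')
    rw [mul_inv_cancel_left] at h
    simp only [Finset.coe_product, Set.mem_prod, Finset.mem_coe, Finset.mem_univ, true_and,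
      Finset.mem_filter]
    rw [NS, ← h, Finset.card_compl, hp, Fintype.card_fin]
    omega
  · rintro ⟨a, b⟩ _ ⟨a', b'⟩ _ h
    simp only [Prod.mk.injEq] at h
    obtain ⟨rfl, h2⟩ := h
    rw [mul_left_cancel h2]

lemma inner_bound (n s m : ℕ) (hs : s + m = n) (hm : 2 ≤ m) (hmn : 100 * m ≤ n) (I : Finset ℕ) :
    ∑ g ∈ I, c n s g ≤ 100 / (n : ℝ) * (m * (4 / 5 : ℝ) ^ m) := by
  have hn0 : (0 : ℝ) < n := by exact_mod_cast (by omega : 0 < n)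
  have hm0 : (0 : ℝ) < m := by exact_mod_cast (by omega : 0 < m)
  have hmn' : (100 : ℝ) * m ≤ n := by exact_mod_cast hmn
  set q : ℝ := Real.sqrt (m / n) with hq
  have hq2 : q ^ 2 = m / n := Real.sq_sqrt (by positivity)
  have hq0 : 0 < q := Real.sqrt_pos.2 (by positivity)
  have hq10 : q ≤ 1 / 10 := by
    rw [hq, Real.sqrt_le_left (by norm_num), div_le_iff₀ hn0]
    linarith
  set N := (Finset.univ.filter fun τ : Equiv.Perm (Fin n) => (NS n τ).card = m).card with hN
  have h1 : (N : ℝ) * q ^ m ≤ (2 * m) ^ m := by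
    have := count_bound (n := n) (m := m) q hq0 (by linarith)
    have e : (n : ℝ) * q ^ 2 + m = 2 * m := by rw [hq2]; field_simp; ring
    rw [e] at this
    exact this
  have h2 : ∑ g ∈ I, c n s g ≤ (n.factorial * N : ℕ) * (4 ^ m / ((n + m).factorial : ℝ)) := by
    refine (sum_c_le n s I).trans ?_
    refine (Finset.sum_le_card_nsmul _ _ (4 ^ m / ((n + m).factorial : ℝ)) ?_).trans ?_
    · rintro ⟨σ, σ'⟩ hp
      simp only [Finset.mem_filter, Finset.mem_univ, true_and] at hp
      apply pairProb_bound
      rw [Finset.card_compl, hp, Fintype.card_fin]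
      omega
    · rw [nsmul_eq_mul]
      apply mul_le_mul_of_nonneg_right _ (by positivity)
      exact_mod_cast card_pairs n s m hs
  have hfac : (n.factorial : ℝ) * n ^ m ≤ (n + m).factorial := by
    have : n.factorial * (n + 1) ^ m ≤ (n + m).factorial := Nat.factorial_mul_pow_le_factorial
    have h3 : n.factorial * n ^ m ≤ n.factorial * (n + 1) ^ m :=
      Nat.mul_le_mul_left _ (Nat.pow_le_pow_left (by omega) _)
    exact_mod_cast h3.trans this
  have h3 : ((n.factorial * N : ℕ) : ℝ) * (4 ^ m / ((n + m).factorial : ℝ)) ≤ (8 * q) ^ m := by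
    rw [← mul_div_assoc, div_le_iff₀ (by positivity)]
    push_cast
    have e : (8 * q) ^ m * (q ^ m * n ^ m) = (2 * m) ^ m * 4 ^ m := by
      rw [← mul_pow, ← mul_pow, ← mul_pow]
      congr 1
      have : q ^ 2 * n = m := by rw [hq2]; field_simp
      linear_combination 8 * this
    have hqm : 0 < q ^ m := by positivity
    have : (n.factorial : ℝ) * N * 4 ^ m * q ^ m ≤ (8 * q) ^ m * (n + m).factorial * q ^ m := by
      calc (n.factorial : ℝ) * N * 4 ^ m * q ^ m = n.factorial * (4 ^ m * (N * q ^ m)) := by ring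
        _ ≤ n.factorial * (4 ^ m * (2 * m) ^ m) := by gcongr
        _ = (8 * q) ^ m * (n.factorial * n ^ m) * q ^ m := by
            linear_combination (-(n.factorial : ℝ)) * e
        _ ≤ _ := by gcongr
    exact le_of_mul_le_mul_right this hqm
  refine h2.trans (h3.trans ?_)
  obtain ⟨k, rfl⟩ := Nat.exists_eq_add_of_le hm
  calc (8 * q) ^ (2 + k) = 64 * q ^ 2 * (8 * q) ^ k := by ring
    _ ≤ 64 * q ^ 2 * (4 / 5) ^ k := by
        gcongr
        linarith
    _ = _ := by rw [hq2, pow_add]; ring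

lemma c_nonneg (n s g : ℕ) : 0 ≤ c n s g :=
  Finset.sum_nonneg fun _ _ => pairProb_nonneg _ _ _

lemma total_bound (n : ℕ) (hn : 2 ≤ n) :
    ∑ s ∈ Finset.Icc ((99 * n + 99) / 100) (n - 2),
          ∑ g ∈ Finset.Icc 1 (min (s + 1) ((n - s) / 2)), c n s g ≤
      100 / (n : ℝ) * ∑' m : ℕ, (m * (4 / 5 : ℝ) ^ m) := by
  have hsum : Summable fun m : ℕ => (m * (4 / 5 : ℝ) ^ m) := by
    have := summable_pow_mul_geometric_of_norm_lt_one (R := ℝ) 1 (r := 4 / 5) (by norm_num)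
    simpa using this
  calc _ ≤ ∑ s ∈ Finset.Icc ((99 * n + 99) / 100) (n - 2),
          100 / (n : ℝ) * (((n - s : ℕ) : ℝ) * (4 / 5 : ℝ) ^ (n - s)) := by
        apply Finset.sum_le_sum
        intro s hs
        rw [Finset.mem_Icc] at hs
        exact inner_bound n s (n - s) (by omega) (by omega) (by omega) _
    _ = 100 / (n : ℝ) * ∑ m ∈ (Finset.Icc ((99 * n + 99) / 100) (n - 2)).image (fun s => n - s),
          ((m : ℝ) * (4 / 5 : ℝ) ^ m) := by
        rw [Finset.sum_image, Finset.mul_sum]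
        intro a ha b hb hab
        simp only [Finset.coe_Icc, Set.mem_Icc] at ha hb hab
        omega
    _ ≤ _ := by
        gcongr
        exact hsum.sum_le_tsum _ fun m _ => by positivity

end RandomHypercube

open RandomHypercube in
/-- The pair sum over pairs sharing at least `⌈0.99 n⌉` edges vanishes as `n → ∞`. -/
theorem sum_c_large_shared_tendsto_zero :
    Tendsto (fun n : ℕ =>
        ∑ s ∈ Finset.Icc ((99 * n + 99) / 100) (n - 2),
          ∑ g ∈ Finset.Icc 1 (min (s + 1) ((n - s) / 2)), c n s g)
      atTop (nhds 0) := by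
  have h0 : Tendsto (fun n : ℕ => 100 / (n : ℝ) * ∑' m : ℕ, (m * (4 / 5 : ℝ) ^ m))
      atTop (nhds 0) := by
    simpa using (tendsto_const_div_atTop_nhds_zero_nat (100 : ℝ)).mul_const
      (∑' m : ℕ, (m * (4 / 5 : ℝ) ^ m))
  refine tendsto_of_tendsto_of_tendsto_of_le_of_le' tendsto_const_nhds h0 ?_ ?_
  · exact Eventually.of_forall fun n =>
      Finset.sum_nonneg fun s _ => Finset.sum_nonneg fun g _ => c_nonneg n s g
  · filter_upwards [eventually_ge_atTop 2] with n hn using total_bound n hn
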